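/- arXiv:2107.02760 — 3 statements merged into one kernel-verified Lean document; each statement's English description precedes it below -/
import Mathlib

section
/- Let 𝔐 be a Γ-ring satisfying conditions (i)–(iv), let k ≥ 1 be an integer, and let f : 𝔐 × Γ × 𝔐 → 𝔐 be a map satisfying conditions (v)–(vii). Then f(x, γ, y) = 0 for all x, y ∈ 𝔐 and γ ∈ Γ. -/
/-!
Fix `γ` and write `g x y = f x γ y`; for `e = e_a`, juxtaposition with `e` means multiplication
through `γ_a`. Idempotent padding (`e = e γ_a e γ_a ⋯ γ_a e`) turns the length-`k` hypotheses into
statements about single multiplications: `g` commutes with left multiplication by elements of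
`e γ_a M` and with right multiplication by products of `k` factors, which include the elements of
`e Γ M`. Faithfulness on both sides then yields the Peirce decompositions
`g x y = g (xe) (ye) + g (x - xe) (y - ye)` and `g x y = g (ex) (ey) + g (x - ex) (y - ey)`.

The rest is Martindale's argument, carried out in `core`.
* On `e M (1 - e)`: for `t` with `e t = 0`, the left multiplier `e + y` sends the pair `(x t, t)` to
  `(x t, y t)`, and `g (x t) t = 0` by the left decomposition. Hence `g (x t) (y t) = 0`, and
  faithfulness gives `g x y = 0`.
* On `e M e`: `p = g x y` satisfies `p = e p e`, and `p Γ M Γ (1 - e)` consists of values of `g` on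
  `e M (1 - e)`, so it vanishes and condition (iv) gives `p = 0`.
* On `e M`: combine the two cases by the right decomposition.
* In general `e_a Γ M Γ (g x y)` consists of values of `g` on `e_a M`, so condition (iii) applies.
-/

/-- A `Γ`-ring in the sense of Barnes: abelian groups `M` and `Γ` with a triple product
`M → Γ → M → M` that is additive in each variable and associative. -/
structure GammaRing (M : Type*) (Γ : Type*) [AddCommGroup M] [AddCommGroup Γ] where
  tri : M → Γ → M → M
  add_left : ∀ x y α z, tri (x + y) α z = tri x α z + tri y α z
  add_right : ∀ x α y z, tri x α (y + z) = tri x α y + tri x α z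
  add_mid : ∀ x α β y, tri x (α + β) y = tri x α y + tri x β y
  assoc : ∀ x α y β z, tri (tri x α y) β z = tri x α (tri y β z)

namespace GammaRing

variable {M Γ : Type*} [AddCommGroup M] [AddCommGroup Γ]

/-- The product `x₀ γ₀ x₁ γ₁ ⋯ γ_{k-1} x_k` (right associated). -/
def prodF (G : GammaRing M Γ) : (k : ℕ) → (Fin (k + 1) → M) → (Fin k → Γ) → M
  | 0, x, _ => x 0
  | k + 1, x, γ => G.tri (x 0) (γ 0) (G.prodF k (fun i => x i.succ) (fun i => γ i.succ))

end GammaRing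


namespace GammaRing

variable {M Γ : Type*} [AddCommGroup M] [AddCommGroup Γ]

lemma zero_tri (G : GammaRing M Γ) (α : Γ) (x : M) : G.tri 0 α x = 0 := by
  have h := G.add_left 0 0 α x
  simpa using h

lemma tri_zero (G : GammaRing M Γ) (α : Γ) (x : M) : G.tri x α 0 = 0 := by
  have h := G.add_right x α 0 0
  simpa using h

lemma sub_tri (G : GammaRing M Γ) (x y : M) (α : Γ) (z : M) :
    G.tri (x - y) α z = G.tri x α z - G.tri y α z := by
  have h := G.add_left (x - y) y α z
  rw [sub_add_cancel] at h
  rw [h, add_sub_cancel_right]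

lemma tri_sub (G : GammaRing M Γ) (x : M) (α : Γ) (y z : M) :
    G.tri x α (y - z) = G.tri x α y - G.tri x α z := by
  have h := G.add_right x α (y - z) z
  rw [sub_add_cancel] at h
  rw [h, add_sub_cancel_right]

/-- Right padding: an element of `e Γ M` is a product of any positive number of factors. -/
lemma exists_prodF_eq (G : GammaRing M Γ) {e : M} {γ : Γ} (he : G.tri e γ e = e)
    (δ : Γ) (q : M) (n : ℕ) : ∃ v ε, G.prodF n v ε = G.tri e δ q := by
  induction n with
  | zero => exact ⟨fun _ => G.tri e δ q, fun _ => γ, rfl⟩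
  | succ n ih =>
    obtain ⟨v, ε, h⟩ := ih
    refine ⟨Fin.cons e v, Fin.cons γ ε, ?_⟩
    rw [prodF]
    simp only [Fin.cons_zero, Fin.cons_succ]
    rw [h, ← G.assoc, he]

/-- Left padding: left multiplication by `u ∈ e γ M` is left multiplication by a word of any
prescribed positive length. -/
lemma exists_prodF_snoc_eq (G : GammaRing M Γ) {e u : M} {γ : Γ} (hu : G.tri e γ u = u) (δ : Γ)
    (n : ℕ) : ∃ (v : Fin (n + 1) → M) (ε : Fin (n + 1) → Γ),
      ∀ x : M, G.prodF (n + 1) (Fin.snoc v x : Fin (n + 2) → M) ε = G.tri u δ x := by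
  induction n with
  | zero =>
    refine ⟨fun _ => u, fun _ => δ, fun x => ?_⟩
    simp [prodF, Fin.snoc]
  | succ n ih =>
    obtain ⟨v, ε, h⟩ := ih
    refine ⟨Fin.cons e v, Fin.cons γ ε, fun x => ?_⟩
    have h1 : (Fin.snoc (Fin.cons e v : Fin (n + 2) → M) x : Fin (n + 3) → M)
        = Fin.cons e (Fin.snoc v x : Fin (n + 2) → M) :=
      (Fin.cons_snoc_eq_snoc_cons e v x).symm
    rw [h1, prodF]
    simp only [Fin.cons_zero, Fin.cons_succ]
    rw [h x, ← G.assoc, hu]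

/-- Condition (ii) iterated: products of `n + 1` factors are jointly faithful on the right. -/
lemma faithful_prodF (G : GammaRing M Γ)
    (hii : ∀ x : M, (∀ (γ : Γ) (m : M), G.tri x γ m = 0) → x = 0) (n : ℕ) :
    ∀ x : M, (∀ δ v ε, G.tri x δ (G.prodF n v ε) = 0) → x = 0 := by
  induction n with
  | zero => exact fun x h => hii x fun γ m => h γ (fun _ => m) Fin.elim0
  | succ n ih =>
    intro x h
    refine hii x fun γ m => ih _ fun δ v ε => ?_
    have := h γ (Fin.cons m v) (Fin.cons δ ε)
    simp only [prodF, Fin.cons_zero, Fin.cons_succ] at this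
    rw [G.assoc, this]

/-- Martindale's argument for a two-variable map `g`. The set `S` stands for the products of `k`
factors; `hL` and `hS` are the single-multiplication forms of the left and right compatibility
conditions. -/
lemma core {Λ : Type*} (G : GammaRing M Γ) (e : Λ → M) (γs : Λ → Γ)
    (hidem : ∀ a, G.tri (e a) (γs a) (e a) = e a)
    (F : Λ → Γ → M → M) (F' : Λ → M → Γ → M)
    (hFγ : ∀ a x, F a (γs a) x = x - G.tri (e a) (γs a) x)
    (hF'γ : ∀ a x, F' a x (γs a) = x - G.tri x (γs a) (e a))
    (hFmid : ∀ a x y β γ, G.tri (F' a x β) γ y = G.tri x β (F a γ y))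
    (hF'tri : ∀ a x γ m δ, F' a (G.tri x γ m) δ = G.tri x γ (F' a m δ))
    (hiii : ∀ x : M, (∀ (a : Λ) (γ δ : Γ) (m : M), G.tri (G.tri (e a) γ m) δ x = 0) → x = 0)
    (hiv : ∀ (a : Λ) (x : M),
      (∀ (γ δ : Γ) (m : M),
        F' a (G.tri (G.tri (G.tri (e a) (γs a) x) (γs a) (e a)) γ m) δ = 0) →
      G.tri (G.tri (e a) (γs a) x) (γs a) (e a) = 0)
    (g : M → M → M) (hg : ∀ x, g x 0 = 0) (hg' : ∀ x, g 0 x = 0)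
    (S : Set M)
    (hS : ∀ P ∈ S, ∀ δ x y, G.tri (g x y) δ P = g (G.tri x δ P) (G.tri y δ P))
    (hSF : ∀ P ∈ S, ∀ a δ, F a δ P ∈ S)
    (hSpad : ∀ a δ q, G.tri (e a) δ q ∈ S)
    (hSfaith : ∀ x, (∀ δ, ∀ P ∈ S, G.tri x δ P = 0) → x = 0)
    (hL : ∀ a u, G.tri (e a) (γs a) u = u → ∀ δ x y,
      G.tri u δ (g x y) = g (G.tri u δ x) (G.tri u δ y))
    (x y : M) : g x y = 0 := by
  -- left and right multiplication by `e_a`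
  have hRe : ∀ a x y, G.tri (g x y) (γs a) (e a)
      = g (G.tri x (γs a) (e a)) (G.tri y (γs a) (e a)) :=
    fun a x y => hS _ (hidem a ▸ hSpad a (γs a) (e a)) _ _ _
  have hLe : ∀ a x y, G.tri (e a) (γs a) (g x y)
      = g (G.tri (e a) (γs a) x) (G.tri (e a) (γs a) y) :=
    fun a x y => hL a _ (hidem a) _ _ _
  have hright : ∀ a x δ P, G.tri (x - G.tri x (γs a) (e a)) δ P = G.tri x (γs a) (F a δ P) := by
    intro a x δ P
    rw [← hF'γ, hFmid]
  have hleft : ∀ a u δ x, G.tri u δ (x - G.tri (e a) (γs a) x) = G.tri (F' a u δ) (γs a) x := by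
    intro a u δ x
    rw [← hFγ, hFmid]
  have hRD : ∀ a x y, g x y = g (G.tri x (γs a) (e a)) (G.tri y (γs a) (e a))
      + g (x - G.tri x (γs a) (e a)) (y - G.tri y (γs a) (e a)) := by
    intro a x y
    rw [← sub_eq_iff_eq_add', ← sub_eq_zero]
    refine hSfaith _ fun δ P hP => ?_
    rw [G.sub_tri, ← hRe, hright, hS _ (hSF P hP a δ), hS P hP, hright, hright, sub_self]
  have hLD : ∀ a x y, g x y = g (G.tri (e a) (γs a) x) (G.tri (e a) (γs a) y)
      + g (x - G.tri (e a) (γs a) x) (y - G.tri (e a) (γs a) y) := by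
    intro a x y
    rw [← sub_eq_iff_eq_add', ← sub_eq_zero]
    refine hiii _ fun b γ δ m => ?_
    have hu : ∀ z, G.tri (e b) (γs b) (G.tri (e b) γ z) = G.tri (e b) γ z := fun z => by
      rw [← G.assoc, hidem]
    rw [G.tri_sub, ← hLe, hleft, hF'tri, hL b _ (hu _), hL b _ (hu _), hleft, hleft, hF'tri,
      sub_self]
  have h12 : ∀ a x y, G.tri (e a) (γs a) x = x → G.tri x (γs a) (e a) = 0 →
      G.tri (e a) (γs a) y = y → G.tri y (γs a) (e a) = 0 → g x y = 0 := by
    intro a x y hx hx0 hy hy0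
    refine hSfaith _ fun δ P hP => ?_
    have hxt := hright a x δ P
    have hyt := hright a y δ P
    rw [hx0, sub_zero] at hxt
    rw [hy0, sub_zero] at hyt
    have het : G.tri (e a) (γs a) (F a δ P) = 0 := by
      rw [← hright, hidem, sub_self, G.zero_tri]
    rw [hS P hP, hxt, hyt]
    generalize F a δ P = t at het
    have h0 : g (G.tri x (γs a) t) t = 0 := by
      rw [hLD a, het, ← G.assoc, hx, sub_self, hg, hg', add_zero]
    have hy' : G.tri (e a) (γs a) (e a + y) = e a + y := by rw [G.add_right, hidem, hy]
    have h1 := hL a _ hy' (γs a) (G.tri x (γs a) t) t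
    have hyx : G.tri y (γs a) x = 0 := by
      rw [← hx, ← G.assoc, hy0, G.zero_tri]
    rw [h0, G.tri_zero, G.add_left, G.add_left, het, zero_add, ← G.assoc, hx, ← G.assoc y, hyx,
      G.zero_tri, add_zero] at h1
    exact h1.symm
  have h11 : ∀ a x y, G.tri (e a) (γs a) x = x → G.tri x (γs a) (e a) = x →
      G.tri (e a) (γs a) y = y → G.tri y (γs a) (e a) = y → g x y = 0 := by
    intro a x y hx hx' hy hy'
    have hp : G.tri (G.tri (e a) (γs a) (g x y)) (γs a) (e a) = g x y := by
      rw [hLe, hx, hy, hRe, hx', hy']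
    rw [← hp]
    refine hiv a _ fun γ δ m => ?_
    rw [hp, hF'tri]
    have hq : G.tri (F' a m δ) (γs a) (e a) = 0 := by
      rw [hFmid, hFγ, hidem, sub_self, G.tri_zero]
    generalize F' a m δ = q at hq
    -- `q` need not lie in `S`, but `e γ q` does, and `p γ q = p γ_a (e γ q)`
    have hpe : G.tri (g x y) (γs a) (e a) = g x y := by rw [hRe, hx', hy']
    rw [← hpe, G.assoc, hS _ (hSpad a γ q), ← G.assoc, ← G.assoc, hx', hy']
    apply h12 a
    · rw [← G.assoc, hx]
    · rw [G.assoc, hq, G.tri_zero]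
    · rw [← G.assoc, hy]
    · rw [G.assoc, hq, G.tri_zero]
  have h1 : ∀ a x y, G.tri (e a) (γs a) x = x → G.tri (e a) (γs a) y = y → g x y = 0 := by
    intro a x y hx hy
    have hl : ∀ z, G.tri (e a) (γs a) z = z →
        G.tri (e a) (γs a) (G.tri z (γs a) (e a)) = G.tri z (γs a) (e a) := fun z hz => by
      rw [← G.assoc, hz]
    have hr : ∀ z, G.tri (G.tri z (γs a) (e a)) (γs a) (e a) = G.tri z (γs a) (e a) := fun z => by
      rw [G.assoc, hidem]
    rw [hRD a, h11 a _ _ (hl x hx) (hr x) (hl y hy) (hr y), zero_add]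
    apply h12 a
    · rw [G.tri_sub, hl x hx, hx]
    · rw [G.sub_tri, hr, sub_self]
    · rw [G.tri_sub, hl y hy, hy]
    · rw [G.sub_tri, hr, sub_self]
  refine hiii _ fun a γ δ m => ?_
  have hu : ∀ z, G.tri (e a) (γs a) (G.tri (e a) γ z) = G.tri (e a) γ z := fun z => by
    rw [← G.assoc, hidem]
  rw [hL a _ (hu m)]
  apply h1 a <;> rw [G.assoc, hu]

end GammaRing

/-- Main theorem: under conditions (i)-(iv) on `𝔐` and (v)-(vii) on `f`, `f = 0`. -/
theorem gammaRing_f_eq_zero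
    {M Γ Λ : Type*} [AddCommGroup M] [AddCommGroup Γ] [Nonempty Λ]
    (G : GammaRing M Γ)
    (e : Λ → M) (γs : Λ → Γ)
    (hidem : ∀ a, G.tri (e a) (γs a) (e a) = e a)
    -- condition (i)
    (F : Λ → Γ → M → M) (F' : Λ → M → Γ → M)
    (hFadd : ∀ a γ x y, F a γ (x + y) = F a γ x + F a γ y)
    (hF'add : ∀ a x y γ, F' a (x + y) γ = F' a x γ + F' a y γ)
    (hFγ : ∀ a x, F a (γs a) x = x - G.tri (e a) (γs a) x)
    (hF'γ : ∀ a x, F' a x (γs a) = x - G.tri x (γs a) (e a))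
    (hFmid : ∀ a x y β γ, G.tri (F' a x β) γ y = G.tri x β (F a γ y))
    -- condition (ii)
    (hii : ∀ x : M, (∀ (γ : Γ) (m : M), G.tri x γ m = 0) → x = 0)
    -- condition (iii)
    (hiii : ∀ x : M, (∀ (a : Λ) (γ δ : Γ) (m : M), G.tri (G.tri (e a) γ m) δ x = 0) → x = 0)
    -- condition (iv)
    (hiv : ∀ (a : Λ) (x : M),
      (∀ (γ δ : Γ) (m : M),
        F' a (G.tri (G.tri (G.tri (e a) (γs a) x) (γs a) (e a)) γ m) δ = 0) →
      G.tri (G.tri (e a) (γs a) x) (γs a) (e a) = 0)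
    (k : ℕ) (hk : 1 ≤ k)
    (f : M → Γ → M → M)
    -- condition (v)
    (hv : ∀ (x : M) (γ : Γ), f x γ 0 = 0 ∧ f 0 γ x = 0)
    -- condition (vi): u₁γ₁u₂⋯γ_{k-1}u_kγ_k f(x,γ,y) = f(u₁γ₁⋯u_kγ_k x, γ, u₁γ₁⋯u_kγ_k y)
    (hvi : ∀ (u : Fin k → M) (δ : Fin k → Γ) (x : M) (γ : Γ) (y : M),
      G.prodF k (Fin.snoc u (f x γ y)) δ =
        f (G.prodF k (Fin.snoc u x) δ) γ (G.prodF k (Fin.snoc u y) δ))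
    -- condition (vii): f(x,γ,y)γ₁u₁⋯γ_ku_k = f(xγ₁u₁⋯γ_ku_k, γ, yγ₁u₁⋯γ_ku_k)
    (hvii : ∀ (u : Fin k → M) (δ : Fin k → Γ) (x : M) (γ : Γ) (y : M),
      G.prodF k (Fin.cons (f x γ y) u) δ =
        f (G.prodF k (Fin.cons x u) δ) γ (G.prodF k (Fin.cons y u) δ))
    :
    ∀ (x : M) (γ : Γ) (y : M), f x γ y = 0 := by
  intro x γ y
  obtain ⟨n, rfl⟩ : ∃ n, k = n + 1 := ⟨k - 1, by omega⟩
  have hF'tri : ∀ a x γ m δ, F' a (G.tri x γ m) δ = G.tri x γ (F' a m δ) := by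
    intro a x γ m δ
    rw [← sub_eq_zero]
    refine hii _ fun ε z => ?_
    rw [G.sub_tri, hFmid, G.assoc, G.assoc, hFmid, sub_self]
  have hFtri : ∀ a δ u ε q, F a δ (G.tri u ε q) = G.tri (F a δ u) ε q := by
    intro a δ u ε q
    rw [← sub_eq_zero]
    refine hiii _ fun b α β m => ?_
    rw [G.tri_sub, ← hFmid, ← G.assoc, hFmid, G.assoc _ β, sub_self]
  refine G.core e γs hidem F F' hFγ hF'γ hFmid hF'tri hiii hiv (fun x y => f x γ y)
    (fun x => (hv x γ).1) (fun x => (hv x γ).2) {P | ∃ v δ, G.prodF n v δ = P}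
    ?_ ?_ ?_ ?_ ?_ x y
  · rintro _ ⟨v, ε, rfl⟩ δ x y
    simpa only [GammaRing.prodF, Fin.cons_zero, Fin.cons_succ] using
      hvii v (Fin.cons δ ε) x γ y
  · rintro _ ⟨v, ε, rfl⟩ a δ
    cases n with
    | zero => exact ⟨fun _ => F a δ (v 0), ε, rfl⟩
    | succ n =>
      refine ⟨Fin.cons (F a δ (v 0)) (fun i => v i.succ), ε, ?_⟩
      simp only [GammaRing.prodF, Fin.cons_zero, Fin.cons_succ, hFtri]
  · exact fun a δ q => G.exists_prodF_eq (hidem a) δ q n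
  · exact fun x h => G.faithful_prodF hii n x fun δ v ε => h δ _ ⟨v, ε, rfl⟩
  · intro a u hu δ x y
    obtain ⟨v, ε, h⟩ := G.exists_prodF_snoc_eq hu δ n
    simpa only [h] using hvi v ε x γ y
end

section
/- Let 𝔐 be a Γ-ring satisfying conditions (i)–(iv), let k ≥ 1 be an integer, let f : 𝔐 × Γ × 𝔐 → 𝔐 satisfy conditions (v)–(vii), fix an index 1 ∈ Λ with e₁ := e_1 and γ₁ := γ_1, and define the Peirce components 𝔐_{ij} as below. Then f(x, γ, u) = 0 for all x, u ∈ 𝔐₁₁ and all γ ∈ Γ. -/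
/-- The Peirce component `𝔐_{ij}` (indices `0, 1` standing for `1, 2`) relative to the
`γ₁`-idempotent `e₁`. -/
def GammaRing.peirce {M Γ : Type*} [AddCommGroup M] [AddCommGroup Γ] (G : GammaRing M Γ)
    (e₁ : M) (γ₁ : Γ) (i j : Fin 2) : Set M :=
  {x | G.tri e₁ γ₁ x = (if i = 0 then x else 0) ∧ G.tri x γ₁ e₁ = (if j = 0 then x else 0)}

namespace GammaRing

variable {M Γ : Type*} [AddCommGroup M] [AddCommGroup Γ]

lemma tri_zero_left (G : GammaRing M Γ) (α : Γ) (y : M) : G.tri 0 α y = 0 := by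
  simpa using G.add_left 0 0 α y

lemma tri_zero_right (G : GammaRing M Γ) (x : M) (α : Γ) : G.tri x α 0 = 0 := by
  simpa using G.add_right x α 0 0

/-- Right multiplication `x δ₁ m₁ δ₂ m₂ ⋯` of `x` by the word `l = [(δ₁, m₁), (δ₂, m₂), …]`. -/
def rmul (G : GammaRing M Γ) : M → List (Γ × M) → M
  | x, [] => x
  | x, w :: l => G.rmul (G.tri x w.1 w.2) l

lemma rmul_zero (G : GammaRing M Γ) (l : List (Γ × M)) : G.rmul 0 l = 0 := by
  induction l with
  | nil => rfl
  | cons w l ih => simp only [rmul, tri_zero_left, ih]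

lemma rmul_append (G : GammaRing M Γ) (l l' : List (Γ × M)) (x : M) :
    G.rmul x (l ++ l') = G.rmul (G.rmul x l) l' := by
  induction l generalizing x with
  | nil => rfl
  | cons w l ih => simp only [List.cons_append, rmul, ih]

lemma rmul_replicate_of_fixed (G : GammaRing M Γ) {e x : M} {g : Γ} (hx : G.tri x g e = x)
    (n : ℕ) : G.rmul x (List.replicate n (g, e)) = x := by
  induction n with
  | zero => rfl
  | succ n ih => simp only [List.replicate_succ, rmul, hx, ih]

lemma rmul_replicate_succ (G : GammaRing M Γ) {e : M} {g : Γ} (he : G.tri e g e = e)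
    (x : M) (n : ℕ) : G.rmul x (List.replicate (n + 1) (g, e)) = G.tri x g e := by
  rw [List.replicate_succ, rmul]
  exact G.rmul_replicate_of_fixed (by rw [G.assoc, he]) n

/-- Every word of length `k` occurs as the tail of a product `prodF k (Fin.cons x u) δ`. -/
lemma exists_prodF_cons_eq_rmul (G : GammaRing M Γ) (k : ℕ) (l : List (Γ × M))
    (hl : l.length = k) :
    ∃ (u : Fin k → M) (δ : Fin k → Γ),
      ∀ x, G.prodF k (Fin.cons x u : Fin (k + 1) → M) δ = G.rmul x l := by
  induction k generalizing l with
  | zero =>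
    obtain rfl := List.length_eq_zero_iff.mp hl
    exact ⟨Fin.elim0, Fin.elim0, fun x => rfl⟩
  | succ k ih =>
    obtain ⟨w, l, rfl⟩ : ∃ w l', l = w :: l' := List.exists_cons_of_length_eq_add_one hl
    obtain ⟨u, δ, h⟩ := ih l (by simpa using hl)
    refine ⟨Fin.cons w.2 u, Fin.cons w.1 δ, fun x => ?_⟩
    have h1 : G.prodF (k + 1) (Fin.cons x (Fin.cons w.2 u : Fin (k + 1) → M) : Fin (k + 2) → M)
        (Fin.cons w.1 δ : Fin (k + 1) → Γ)
        = G.tri x w.1 (G.prodF k (Fin.cons w.2 u : Fin (k + 1) → M) δ) := by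
      simp [prodF]
    rw [h1, rmul, ← h]
    cases k with
    | zero => simp [prodF]
    | succ k => simp [prodF, G.assoc]

lemma prodF_snoc_const (G : GammaRing M Γ) {e : M} {g : Γ} (he : G.tri e g e = e)
    (y : M) (n : ℕ) :
    G.prodF (n + 1) (Fin.snoc (fun _ : Fin (n + 1) => e) y : Fin (n + 2) → M) (fun _ => g)
      = G.tri e g y := by
  induction n with
  | zero => simp [prodF, Fin.snoc]
  | succ n ih =>
    have h0 : (Fin.snoc (fun _ : Fin (n + 2) => e) y : Fin (n + 3) → M) 0 = e := by
      simp [Fin.snoc]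
    have h1 : (fun i : Fin (n + 2) =>
        (Fin.snoc (fun _ : Fin (n + 2) => e) y : Fin (n + 3) → M) i.succ)
        = (Fin.snoc (fun _ : Fin (n + 1) => e) y : Fin (n + 2) → M) := by
      funext i
      simp [Fin.snoc]
    rw [prodF, h0, h1, ih, ← G.assoc, he]

/-- Condition (ii), iterated along words of length `n`. -/
lemma eq_zero_of_rmul (G : GammaRing M Γ)
    (hii : ∀ x : M, (∀ (γ : Γ) (m : M), G.tri x γ m = 0) → x = 0) (n : ℕ) (x : M)
    (h : ∀ l : List (Γ × M), l.length = n → G.rmul x l = 0) : x = 0 := by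
  induction n generalizing x with
  | zero => exact h [] rfl
  | succ n ih =>
    exact hii x fun γ m => ih _ fun l hl => h ((γ, m) :: l) (by simp [hl])

end GammaRing

/-- Claim 4: `f(x₁₁, γ, u₁₁) = 0`. -/
theorem gammaRing_f_claim4
    {M Γ Λ : Type*} [AddCommGroup M] [AddCommGroup Γ] [Nonempty Λ]
    (G : GammaRing M Γ)
    (e : Λ → M) (γs : Λ → Γ)
    (hidem : ∀ a, G.tri (e a) (γs a) (e a) = e a)
    -- condition (i)
    (F : Λ → Γ → M → M) (F' : Λ → M → Γ → M)
    (hFadd : ∀ a γ x y, F a γ (x + y) = F a γ x + F a γ y)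
    (hF'add : ∀ a x y γ, F' a (x + y) γ = F' a x γ + F' a y γ)
    (hFγ : ∀ a x, F a (γs a) x = x - G.tri (e a) (γs a) x)
    (hF'γ : ∀ a x, F' a x (γs a) = x - G.tri x (γs a) (e a))
    (hFmid : ∀ a x y β γ, G.tri (F' a x β) γ y = G.tri x β (F a γ y))
    -- condition (ii)
    (hii : ∀ x : M, (∀ (γ : Γ) (m : M), G.tri x γ m = 0) → x = 0)
    -- condition (iii)
    (hiii : ∀ x : M, (∀ (a : Λ) (γ δ : Γ) (m : M), G.tri (G.tri (e a) γ m) δ x = 0) → x = 0)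
    -- condition (iv)
    (hiv : ∀ (a : Λ) (x : M),
      (∀ (γ δ : Γ) (m : M),
        F' a (G.tri (G.tri (G.tri (e a) (γs a) x) (γs a) (e a)) γ m) δ = 0) →
      G.tri (G.tri (e a) (γs a) x) (γs a) (e a) = 0)
    (k : ℕ) (hk : 1 ≤ k)
    (f : M → Γ → M → M)
    -- condition (v)
    (hv : ∀ (x : M) (γ : Γ), f x γ 0 = 0 ∧ f 0 γ x = 0)
    -- condition (vi): u₁γ₁u₂⋯γ_{k-1}u_kγ_k f(x,γ,y) = f(u₁γ₁⋯u_kγ_k x, γ, u₁γ₁⋯u_kγ_k y)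
    (hvi : ∀ (u : Fin k → M) (δ : Fin k → Γ) (x : M) (γ : Γ) (y : M),
      G.prodF k (Fin.snoc u (f x γ y)) δ =
        f (G.prodF k (Fin.snoc u x) δ) γ (G.prodF k (Fin.snoc u y) δ))
    -- condition (vii): f(x,γ,y)γ₁u₁⋯γ_ku_k = f(xγ₁u₁⋯γ_ku_k, γ, yγ₁u₁⋯γ_ku_k)
    (hvii : ∀ (u : Fin k → M) (δ : Fin k → Γ) (x : M) (γ : Γ) (y : M),
      G.prodF k (Fin.cons (f x γ y) u) δ =
        f (G.prodF k (Fin.cons x u) δ) γ (G.prodF k (Fin.cons y u) δ))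
    (a₁ : Λ) :
    ∀ x ∈ G.peirce (e a₁) (γs a₁) 0 0, ∀ u ∈ G.peirce (e a₁) (γs a₁) 0 0, ∀ γ : Γ,
      f x γ u = 0 := by
  obtain ⟨n, rfl⟩ : ∃ n, k = n + 1 := ⟨k - 1, by omega⟩
  have he := hidem a₁
  have hFg := hFγ a₁
  have hF'g := hF'γ a₁
  have hmid := hFmid a₁
  have hiv' := hiv a₁
  generalize e a₁ = E at *
  generalize γs a₁ = g at *
  have hR : ∀ l : List (Γ × M), l.length = n + 1 → ∀ x γ y,
      G.rmul (f x γ y) l = f (G.rmul x l) γ (G.rmul y l) := by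
    intro l hl x γ y
    obtain ⟨u, δ, h⟩ := G.exists_prodF_cons_eq_rmul (n + 1) l hl
    rw [← h, ← h, ← h]
    exact hvii u δ x γ y
  have hL : ∀ x γ y, G.tri E g (f x γ y) = f (G.tri E g x) γ (G.tri E g y) := by
    intro x γ y
    have h := hvi (fun _ => E) (fun _ => g) x γ y
    rwa [G.prodF_snoc_const he, G.prodF_snoc_const he, G.prodF_snoc_const he] at h
  have hRe : ∀ x γ y, G.tri (f x γ y) g E = f (G.tri x g E) γ (G.tri y g E) := by
    intro x γ y
    have h := hR (List.replicate (n + 1) (g, E)) (by simp) x γ y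
    rwa [G.rmul_replicate_succ he, G.rmul_replicate_succ he, G.rmul_replicate_succ he] at h
  have hEF : ∀ ε m, G.tri E g (F a₁ ε m) = 0 := by
    intro ε m
    rw [← hmid, hF'g, he, sub_self, G.tri_zero_left]
  have hE12 : ∀ γ b, G.tri b g E = 0 → f E γ b = 0 := by
    intro γ b hb
    have h1 : G.tri (f E γ b) g E = 0 := by rw [hRe, hb, (hv _ _).1]
    refine G.eq_zero_of_rmul hii (n + 1) _ fun l hl => ?_
    obtain ⟨w, l, rfl⟩ : ∃ w l', l = w :: l' := List.exists_cons_of_length_eq_add_one hl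
    have h2 : G.tri (f E γ b) w.1 w.2 = G.tri (f E γ b) g (F a₁ w.1 w.2) := by
      rw [← hmid, hF'g, h1, sub_zero]
    have h3 := hR ((g, F a₁ w.1 w.2) :: l) (by simpa using hl) E γ b
    simp only [GammaRing.rmul] at h3 ⊢
    rw [h2, h3, hEF, G.rmul_zero, (hv _ _).2]
  have hAC : ∀ γ A C β ε m (l : List (Γ × M)), l.length = n → G.tri E g A = A →
      G.rmul (f A γ C) ((β, F a₁ ε m) :: l) = 0 := by
    intro γ A C β ε m l hl hA
    have hz := hEF ε m
    generalize F a₁ ε m = z at *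
    have h0 : f E γ (F' a₁ C β) = 0 := by
      apply hE12
      rw [hmid, hFg, he, sub_self, G.tri_zero_right]
    have h1 := hR ((g, G.tri A β z + z) :: l) (by simp [hl]) E γ (F' a₁ C β)
    have h2 : G.tri E g (G.tri A β z + z) = G.tri A β z := by
      rw [G.add_right, hz, add_zero, ← G.assoc, hA]
    have h3 : G.tri (F' a₁ C β) g (G.tri A β z + z) = G.tri C β z := by
      rw [hmid, hFg, h2, add_sub_cancel_left]
    rw [hR _ (by simp [hl])]
    simp only [GammaRing.rmul] at h1 ⊢
    rw [h2, h3, h0, G.tri_zero_left, G.rmul_zero] at h1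
    exact h1.symm
  intro x hx u hu γ
  obtain ⟨hx1, hx2⟩ : G.tri E g x = x ∧ G.tri x g E = x := by simpa [GammaRing.peirce] using hx
  obtain ⟨hu1, hu2⟩ : G.tri E g u = u ∧ G.tri u g E = u := by simpa [GammaRing.peirce] using hu
  have hp1 : G.tri E g (f x γ u) = f x γ u := by rw [hL, hx1, hu1]
  have hp2 : G.tri (f x γ u) g E = f x γ u := by rw [hRe, hx2, hu2]
  have key := hiv' (f x γ u)
  rw [hp1, hp2] at key
  refine key fun δ β m => ?_
  -- Left padding by `g E` turns the single factor `δ m` into a word of length `n + 1`.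
  have hpm : G.tri (f x γ u) δ m = f (G.tri x δ m) γ (G.tri u δ m) := by
    have h := hR (List.replicate n (g, E) ++ [(δ, m)]) (by simp) x γ u
    simpa only [G.rmul_append, G.rmul_replicate_of_fixed hp2, G.rmul_replicate_of_fixed hx2,
      G.rmul_replicate_of_fixed hu2, GammaRing.rmul] using h
  refine G.eq_zero_of_rmul hii (n + 1) _ fun l hl => ?_
  obtain ⟨w, l, rfl⟩ : ∃ w l', l = w :: l' := List.exists_cons_of_length_eq_add_one hl
  rw [GammaRing.rmul, hmid, hpm]
  exact hAC γ _ _ β w.1 w.2 l (by simpa using hl) (by rw [← G.assoc, hx1])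
end

section
/- Let n > 1 be an integer, 𝔐 a Γ-ring, 𝔊 a Δ-ring, and (φ, ψ) an n-multiplicative isomorphism of 𝔐 onto 𝔊. Define f : 𝔐 × Γ × 𝔐 → 𝔐 by f(x, γ, y) = φ⁻¹(φ(x + y) − φ(x) − φ(y)). Then f satisfies: f(x, γ, 0) = f(0, γ, x) = 0 for all x ∈ 𝔐, γ ∈ Γ; f(x, γ, y)γ₁u₁γ₂u₂⋯γ_{n−1}u_{n−1} = f(xγ₁u₁γ₂u₂⋯γ_{n−1}u_{n−1}, γ, yγ₁u₁γ₂u₂⋯γ_{n−1}u_{n−1}); and u₁γ₁u₂γ₂⋯u_{n−1}γ_{n−1}f(x, γ, y) = f(u₁γ₁u₂⋯u_{n−1}γ_{n−1}x, γ, u₁γ₁u₂⋯u_{n−1}γ_{n−1}y), for all x, y, u₁, …, u_{n−1} ∈ 𝔐 and γ, γ₁, …, γ_{n−1} ∈ Γ. -/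
namespace GammaRing

section Additivity

variable {M Γ : Type*} [AddCommGroup M] [AddCommGroup Γ]

/-- The product is additive in each of its `k + 1` ring entries. -/
theorem prodF_update_add (G : GammaRing M Γ) : ∀ (k : ℕ) (i : Fin (k + 1)) (x : Fin (k + 1) → M)
    (γ : Fin k → Γ) (a b : M),
    G.prodF k (Function.update x i (a + b)) γ =
      G.prodF k (Function.update x i a) γ + G.prodF k (Function.update x i b) γ
  | 0, i, x, γ, a, b => by
    obtain rfl : i = 0 := Fin.fin_one_eq_zero i
    simp [prodF]
  | k + 1, i, x, γ, a, b => by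
    refine Fin.cases ?_ (fun j => ?_) i
    · simp [prodF, G.add_left, Fin.succ_ne_zero]
    · have h : ∀ c : M, (fun l : Fin (k + 1) => Function.update x j.succ c l.succ) =
          Function.update (fun l : Fin (k + 1) => x l.succ) j c := by
        intro c
        funext l
        simp [Function.update_apply]
      have h0 : ∀ c : M, Function.update x j.succ c 0 = x 0 := fun c =>
        Function.update_of_ne (Fin.succ_ne_zero j).symm _ _
      simp only [prodF, h, h0, prodF_update_add G k j, G.add_right]

theorem prodF_update_sub (G : GammaRing M Γ) (k : ℕ) (i : Fin (k + 1)) (x : Fin (k + 1) → M)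
    (γ : Fin k → Γ) (a b : M) :
    G.prodF k (Function.update x i (a - b)) γ =
      G.prodF k (Function.update x i a) γ - G.prodF k (Function.update x i b) γ := by
  rw [eq_sub_iff_add_eq, ← prodF_update_add, sub_add_cancel]

theorem prodF_eq_zero (G : GammaRing M Γ) (k : ℕ) (i : Fin (k + 1)) (x : Fin (k + 1) → M)
    (γ : Fin k → Γ) (hx : x i = 0) : G.prodF k x γ = 0 := by
  have h := G.prodF_update_sub k i x γ 0 0
  have hself : Function.update x i 0 = x := by rw [← hx, Function.update_eq_self]
  rwa [sub_self, sub_self, hself] at h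

end Additivity

section Obstruction

variable {M Γ G' Δ : Type*} [AddCommGroup M] [AddCommGroup Γ] [AddCommGroup G'] [AddCommGroup Δ]
  {G : GammaRing M Γ} {H : GammaRing G' Δ} {k : ℕ} {φ : M ≃ G'} {ψ : Γ ≃ Δ}

/-- A multiplicative bijection for products of at least two ring entries fixes zero. The entries
`0` and `φ⁻¹ 0` placed in different slots annihilate the product on the two sides. -/
theorem map_zero_of_prodF (hk : 0 < k)
    (hmul : ∀ (x : Fin (k + 1) → M) (γ : Fin k → Γ),
      φ (G.prodF k x γ) = H.prodF k (fun i => φ (x i)) (fun i => ψ (γ i))) :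
    φ 0 = 0 := by
  have hne : (Fin.last k) ≠ 0 := by
    intro h
    have := congrArg Fin.val h
    simp at this
    omega
  have h := hmul (Function.update (fun _ => 0) (Fin.last k) (φ.symm 0)) (fun _ => 0)
  rwa [G.prodF_eq_zero k 0 _ _ (by rw [Function.update_of_ne hne.symm]),
    H.prodF_eq_zero k (Fin.last k) _ _ (by simp)] at h

/-- Multiplication with the free variable in an arbitrary slot `i` commutes with
`(x, y) ↦ φ⁻¹(φ(x + y) - φ x - φ y)`. -/
theorem symm_obstruction_prodF_update
    (hmul : ∀ (x : Fin (k + 1) → M) (γ : Fin k → Γ),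
      φ (G.prodF k x γ) = H.prodF k (fun i => φ (x i)) (fun i => ψ (γ i)))
    (i : Fin (k + 1)) (u : Fin (k + 1) → M) (δ : Fin k → Γ) (x y : M) :
    G.prodF k (Function.update u i (φ.symm (φ (x + y) - φ x - φ y))) δ =
      φ.symm (φ (G.prodF k (Function.update u i x) δ + G.prodF k (Function.update u i y) δ)
        - φ (G.prodF k (Function.update u i x) δ) - φ (G.prodF k (Function.update u i y) δ)) := by
  have key : ∀ a : M, φ (G.prodF k (Function.update u i a) δ) =
      H.prodF k (Function.update (fun l => φ (u l)) i (φ a)) (fun l => ψ (δ l)) := by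
    intro a
    rw [hmul]
    congr 1
    funext l
    simp only [Function.update_apply]
    split_ifs <;> rfl
  rw [Equiv.eq_symm_apply, ← prodF_update_add, key, key, key, key, Equiv.apply_symm_apply,
    prodF_update_sub, prodF_update_sub]

end Obstruction

end GammaRing

/-- The obstruction map `f(x, γ, y) = φ⁻¹(φ(x+y) - φ(x) - φ(y))` of an `n`-multiplicative
isomorphism satisfies conditions (v)-(vii) (with `k = n - 1`). -/
theorem gammaRing_nMulIso_obstruction
    {M Γ G' Δ : Type*} [AddCommGroup M] [AddCommGroup Γ] [AddCommGroup G'] [AddCommGroup Δ]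
    (G : GammaRing M Γ) (H : GammaRing G' Δ)
    (n : ℕ) (hn : 1 < n)
    (φ : M ≃ G') (ψ : Γ ≃ Δ)
    (hmul : ∀ (x : Fin (n - 1 + 1) → M) (γ : Fin (n - 1) → Γ),
      φ (G.prodF (n - 1) x γ) = H.prodF (n - 1) (fun i => φ (x i)) (fun i => ψ (γ i)))
    (f : M → Γ → M → M)
    (hf : ∀ (x : M) (γ : Γ) (y : M), f x γ y = φ.symm (φ (x + y) - φ x - φ y)) :
    (∀ (x : M) (γ : Γ), f x γ 0 = 0 ∧ f 0 γ x = 0) ∧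
    (∀ (u : Fin (n - 1) → M) (δ : Fin (n - 1) → Γ) (x : M) (γ : Γ) (y : M),
      G.prodF (n - 1) (Fin.cons (f x γ y) u) δ =
        f (G.prodF (n - 1) (Fin.cons x u) δ) γ (G.prodF (n - 1) (Fin.cons y u) δ)) ∧
    (∀ (u : Fin (n - 1) → M) (δ : Fin (n - 1) → Γ) (x : M) (γ : Γ) (y : M),
      G.prodF (n - 1) (Fin.snoc u (f x γ y)) δ =
        f (G.prodF (n - 1) (Fin.snoc u x) δ) γ (G.prodF (n - 1) (Fin.snoc u y) δ)) := by
  have hk : 0 < n - 1 := by omega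
  generalize n - 1 = k at *
  have h0 : φ 0 = 0 := GammaRing.map_zero_of_prodF hk hmul
  have h0' : φ.symm 0 = 0 := by rw [Equiv.symm_apply_eq, h0]
  refine ⟨fun x γ => ⟨?_, ?_⟩, fun u δ x γ y => ?_, fun u δ x γ y => ?_⟩
  · simp [hf, h0, h0']
  · simp [hf, h0, h0']
  · have hc : ∀ a : M, (Fin.cons a u : Fin (k + 1) → M) =
        Function.update (Fin.cons 0 u : Fin (k + 1) → M) 0 a := fun a =>
      (Fin.update_cons_zero (α := fun _ => M) 0 u a).symm
    rw [hc (f x γ y), hc x, hc y]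
    simp only [hf]
    exact GammaRing.symm_obstruction_prodF_update hmul 0 _ δ x y
  · have hs : ∀ a : M, (Fin.snoc u a : Fin (k + 1) → M) =
        Function.update (Fin.snoc u 0 : Fin (k + 1) → M) (Fin.last k) a := fun a =>
      (Fin.update_snoc_last (α := fun _ => M) 0 u a).symm
    rw [hs (f x γ y), hs x, hs y]
    simp only [hf]
    exact GammaRing.symm_obstruction_prodF_update hmul (Fin.last k) _ δ x y
end
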